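/- Let \mu be a positive Borel measure on \mathbb{R} for which every polynomial is integrable, admitting a sequence (\hat p_n)_{n\ge 0} of monic orthogonal polynomials (deg \hat p_n = n, \hat p_n monic, \int \hat p_n \hat p_k d\mu = 0 for n \ne k), and write \|\hat p_j\|^2 = \int \hat p_j^2 d\mu. Set C_{n,m} = \frac{(-1)^{mn} \, m! \, \prod_{j=0}^{m-1} \|\hat p_j\|^2}{\prod_{j=0}^{n-1} j!}. Then for every real u, every integer n \ge 0 and every integer m \ge 1, the following two identities hold: (i) \int_{\mathbb{R}^m} \Lambda^2(x) \prod_{j=1}^m (x_j - u)^n \, d\mu(x_1)\cdots d\mu(x_m) = C_{n,m} \cdot \det\big( \hat p_{m+j-1}^{(i-1)}(u) \big)_{i,j=1}^n, where \hat p^{(i-1)} is the (i-1)-st derivative; and (ii) \int_{\mathbb{R}^m} \Lambda^2(x) \prod_{j=1}^m (x_j - u - n + 1)_n \, d\mu(x_1)\cdots d\mu(x_m) = C_{n,m} \cdot \det\big( \Delta^{i-1}\hat p_{m+j-1}(u) \big)_{i,j=1}^n, where \Delta is the forward difference operator \Delta f(x) = f(x+1) - f(x). The 0\times 0 determinants equal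 1 when n = 0. -/

import Mathlib

open MeasureTheory Polynomial

/-- The Pochhammer symbol `(y)_l = y (y+1) ⋯ (y+l-1)`. -/
noncomputable def poch (y : ℝ) (l : ℕ) : ℝ := ∏ k ∈ Finset.range l, (y + k)

/-- The forward difference operator `Δ f (x) = f (x+1) - f x`. -/
noncomputable def fdiff (g : ℝ → ℝ) : ℝ → ℝ := fun x => g (x + 1) - g x
namespace SelbergAux

abbrev Idx (m n : ℕ) := Fin m ⊕ Fin n

/-- column degree -/
def cdeg {m n : ℕ} (s : Idx m n) : ℕ := (finSumFinEquiv s : ℕ)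

lemma cdeg_inl {m n : ℕ} (i : Fin m) : cdeg (Sum.inl i : Idx m n) = i := by simp [cdeg]
lemma cdeg_inr {m n : ℕ} (i : Fin n) : cdeg (Sum.inr i : Idx m n) = m + i := by simp [cdeg]
lemma cdeg_lt {m n : ℕ} (s : Idx m n) : cdeg s < m + n := (finSumFinEquiv s).isLt

lemma det_lin_fin {N : ℕ} (l : Fin N → (ℝ[X] →ₗ[ℝ] ℝ)) (p : ℕ → ℝ[X])
    (hmonic : ∀ k < N, (p k).Monic) (hdeg : ∀ k < N, (p k).natDegree = k) :
    (Matrix.of fun i j : Fin N => l i (p j)).det =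
      (Matrix.of fun i j : Fin N => l i (X ^ (j : ℕ))).det := by
  have h : (Matrix.of fun i j : Fin N => l i (p j)) =
      (Matrix.of fun i j : Fin N => l i (X ^ (j : ℕ))) *
        (Matrix.of fun i j : Fin N => (p j).coeff i) := by
    ext i j
    rw [Matrix.mul_apply]
    simp only [Matrix.of_apply]
    rw [Fin.sum_univ_eq_sum_range (fun k => l i (X ^ k) * (p j).coeff k)]
    conv_lhs => rw [(p j).as_sum_range' N (by rw [hdeg j j.isLt]; exact j.isLt)]
    rw [map_sum]
    refine Finset.sum_congr rfl fun k _ => ?_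
    rw [← C_mul_X_pow_eq_monomial, ← smul_eq_C_mul, map_smul, smul_eq_mul, mul_comm]
  rw [h, Matrix.det_mul, Matrix.det_matrixOfPolynomials (fun j : Fin N => p j)
    (fun i => hdeg i i.isLt) (fun i => hmonic i i.isLt), mul_one]

/-- the big matrix -/
noncomputable def big {m n : ℕ} (L : ℕ → (ℝ[X] →ₗ[ℝ] ℝ)) (p : ℕ → ℝ[X]) (x : Fin m → ℝ) :
    Matrix (Idx m n) (Idx m n) ℝ :=
  Matrix.of fun r s => Sum.elim (fun i => (p (cdeg s)).eval (x i)) (fun j : Fin n => L j (p (cdeg s))) r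

lemma big_eq {m n : ℕ} (L : ℕ → (ℝ[X] →ₗ[ℝ] ℝ)) (p q : ℕ → ℝ[X]) (x : Fin m → ℝ)
    (hp : ∀ k < m + n, (p k).Monic) (hp' : ∀ k < m + n, (p k).natDegree = k)
    (hq : ∀ k < m + n, (q k).Monic) (hq' : ∀ k < m + n, (q k).natDegree = k) :
    (big (n := n) L p x).det = (big (n := n) L q x).det := by
  have key : ∀ p : ℕ → ℝ[X], (big (n := n) L p x).det =
      (Matrix.of fun i j : Fin (m + n) =>
        (Sum.elim (fun i => Polynomial.leval (x i)) (fun j : Fin n => L j)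
          (finSumFinEquiv.symm i) : ℝ[X] →ₗ[ℝ] ℝ) (p j)).det := by
    intro p
    rw [← Matrix.det_submatrix_equiv_self (finSumFinEquiv (m := m) (n := n))]
    congr 1
    ext r s
    rcases r with i | j <;> simp [big, cdeg, Polynomial.leval]
  rw [key, key, det_lin_fin _ _ hp hp', det_lin_fin _ _ hq hq']

lemma rot_val (N : ℕ) (n : ℕ) (i : Fin N) : (((finRotate N) ^ n) i : ℕ) = (i + n) % N := by
  induction n with
  | zero => simp [Nat.mod_eq_of_lt i.isLt]
  | succ n ih =>
    rw [pow_succ', Equiv.Perm.mul_apply]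
    obtain ⟨N, rfl⟩ : ∃ M, N = M + 1 := ⟨N - 1, by have := i.isLt; omega⟩
    rw [finRotate_apply, Fin.val_add, ih, ← add_assoc, Fin.val_one', Nat.add_mod_mod, Nat.mod_add_mod]

/-- the block swap -/
def swp (m n : ℕ) : Equiv.Perm (Idx m n) :=
  finSumFinEquiv.symm.permCongr ((finRotate (m + n)) ^ n)

lemma cdeg_swp {m n : ℕ} (s : Idx m n) : cdeg (swp m n s) = (cdeg s + n) % (m + n) := by
  simp only [swp, cdeg, Equiv.permCongr_apply, Equiv.apply_symm_apply, Equiv.symm_symm, rot_val]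

lemma sign_swp {m n : ℕ} (hm : 1 ≤ m) : ((Equiv.Perm.sign (swp m n) : ℤ) : ℝ) = (-1) ^ (m * n) := by
  rw [swp, Equiv.Perm.sign_permCongr, map_pow, sign_finRotate]
  push_cast
  rw [← pow_mul]
  have : Even (n * (n - 1)) := Nat.even_mul_pred_self n
  rcases n with _ | n
  · simp
  have e : (m + (n + 1) - 1) * (n + 1) = m * (n + 1) + (n + 1) * (n + 1 - 1) := by
    simp; ring
  rw [e, pow_add, this.neg_one_pow, mul_one]

lemma big_val {m n : ℕ} (hm : 1 ≤ m) (L : ℕ → (ℝ[X] →ₗ[ℝ] ℝ)) (p a : ℕ → ℝ[X]) (x : Fin m → ℝ)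
    (hp : ∀ k, (p k).Monic) (hp' : ∀ k, (p k).natDegree = k)
    (ha : ∀ k, (a k).Monic) (ha' : ∀ k, (a k).natDegree = k)
    (hL : ∀ i < n, ∀ k < n, L i (a k) = if i = k then (i.factorial : ℝ) else 0)
    (hL' : ∀ i < n, ∀ q, L i (a n * q) = 0) :
    (big (n := n) L p x).det = (-1) ^ (m * n) * ((∏ j ∈ Finset.range n, (j.factorial : ℝ)) *
      ((∏ i, (a n).eval (x i)) * (Matrix.vandermonde x).det)) := by
  set q : ℕ → ℝ[X] := fun k => if k < n then a k else a n * X ^ (k - n) with hqdef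
  have hq : ∀ k, (q k).Monic := by
    intro k
    simp only [hqdef]
    split_ifs
    · exact ha k
    · exact (ha n).mul (monic_X_pow _)
  have hq' : ∀ k, (q k).natDegree = k := by
    intro k
    simp only [hqdef]
    split_ifs with h
    · exact ha' k
    · rw [(ha n).natDegree_mul (monic_X_pow _), ha', natDegree_X_pow]; omega
  rw [big_eq L p q x (fun k _ => hp k) (fun k _ => hp' k) (fun k _ => hq k) (fun k _ => hq' k)]
  have h1 := Matrix.det_permute' (swp m n) (big (n := n) L q x)
  rw [sign_swp hm] at h1
  have h2 : (big (n := n) L q x).submatrix id (swp m n) =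
      Matrix.fromBlocks (Matrix.of fun i k : Fin m => (a n).eval (x i) * (Matrix.vandermonde x) i k)
        (Matrix.of fun (i : Fin m) (j : Fin n) => (a j).eval (x i)) 0
        (Matrix.diagonal fun j : Fin n => ((j : ℕ).factorial : ℝ)) := by
    have c1 : ∀ k : Fin m, cdeg (swp m n (Sum.inl k)) = n + k := by
      intro k
      rw [cdeg_swp, cdeg_inl, Nat.mod_eq_of_lt (by omega), add_comm]
    have c2 : ∀ k : Fin n, cdeg (swp m n (Sum.inr k)) = k := by
      intro k
      rw [cdeg_swp, cdeg_inr, show m + (k : ℕ) + n = k + (m + n) by ring, Nat.add_mod_right,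
        Nat.mod_eq_of_lt (by omega)]
    ext r s
    rcases r with i | i <;> rcases s with k | k
    · simp [big, c1, hqdef]
    · simp [big, c2, hqdef]
    · simp [big, c1, hqdef, hL' i i.isLt]
    · simp [big, c2, hqdef, hL i i.isLt k k.isLt, Matrix.diagonal_apply, Fin.ext_iff]
  rw [h2, Matrix.det_fromBlocks_zero₂₁, Matrix.det_diagonal, Matrix.det_mul_column,
    Fin.prod_univ_eq_prod_range (fun j => (j.factorial : ℝ))] at h1
  have hs : ((-1 : ℝ) ^ (m * n)) * (-1) ^ (m * n) = 1 := by
    rw [← mul_pow]; simp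
  calc (big (n := n) L q x).det
      = ((-1 : ℝ) ^ (m * n)) * (-1) ^ (m * n) * (big (n := n) L q x).det := by rw [hs, one_mul]
    _ = _ := by rw [mul_assoc, ← h1]; ring

section integral
variable {μ : Measure ℝ} [SigmaFinite μ]

lemma int_perm {m : ℕ} (g : Fin m → ℝ → ℝ) (τ : Equiv.Perm (Fin m)) :
    ∫ x : Fin m → ℝ, ∏ i, g i (x (τ i)) ∂(Measure.pi fun _ => μ) = ∏ i, ∫ t, g i t ∂μ := by
  have : ∀ x : Fin m → ℝ, ∏ i, g i (x (τ i)) = ∏ i, g (τ.symm i) (x i) := by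
    intro x
    rw [← Equiv.prod_comp τ (fun i => g (τ.symm i) (x i))]
    simp
  simp_rw [this]
  rw [integral_fintype_prod_eq_prod (fun i => g (τ.symm i))]
  exact Equiv.prod_comp τ.symm (fun i => ∫ t, g i t ∂μ)

lemma intble_perm {m : ℕ} (g : Fin m → ℝ → ℝ) (hg : ∀ i, Integrable (g i) μ)
    (τ : Equiv.Perm (Fin m)) :
    Integrable (fun x : Fin m → ℝ => ∏ i, g i (x (τ i))) (Measure.pi fun _ => μ) := by
  have : ∀ x : Fin m → ℝ, ∏ i, g i (x (τ i)) = ∏ i, g (τ.symm i) (x i) := by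
    intro x
    rw [← Equiv.prod_comp τ (fun i => g (τ.symm i) (x i))]
    simp
  simp_rw [this]
  exact Integrable.fintype_prod (f := fun i => g (τ.symm i)) (fun i => hg _)

lemma expand {m n : ℕ} (L : ℕ → (ℝ[X] →ₗ[ℝ] ℝ)) (p : ℕ → ℝ[X]) (x : Fin m → ℝ) :
    (Matrix.of fun i k : Fin m => (p k).eval (x i)).det * (big (n := n) L p x).det =
    ∑ τ : Equiv.Perm (Fin m), ∑ σ : Equiv.Perm (Idx m n), ((Equiv.Perm.sign σ : ℤ) : ℝ) *
      ((∏ j : Fin n, L j (p (cdeg (σ (Sum.inr j))))) *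
      ∏ i : Fin m, ((p i).eval (x (τ i)) * (p (cdeg (σ (Sum.inl i)))).eval (x (τ i)))) := by
  rw [Matrix.det_apply', Finset.sum_mul]
  refine Finset.sum_congr rfl fun τ _ => ?_
  have h1 : ((Equiv.Perm.sign τ : ℤ) : ℝ) * (big (n := n) L p x).det =
      (big (n := n) L p (x ∘ τ)).det := by
    have h := Matrix.det_permute (Equiv.Perm.sumCongr τ (1 : Equiv.Perm (Fin n)))
      (big (n := n) L p x)
    rw [Equiv.Perm.sign_sumCongr, Equiv.Perm.sign_one, mul_one] at h
    rw [← h]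
    congr 1
    ext r s
    rcases r with i | i <;> simp [big]
  calc _ = (∏ i : Fin m, (p i).eval (x (τ i))) *
        (((Equiv.Perm.sign τ : ℤ) : ℝ) * (big (n := n) L p x).det) := by
        simp only [Matrix.of_apply]; ring
    _ = _ := by
        rw [h1, ← Matrix.det_transpose, Matrix.det_apply', Finset.mul_sum]
        refine Finset.sum_congr rfl fun σ _ => ?_
        rw [Fintype.prod_sum_type, Finset.prod_mul_distrib]
        simp only [big, Matrix.transpose_apply, Matrix.of_apply, Sum.elim_inl, Sum.elim_inr,
          Function.comp]
        ring

lemma integral_main {m n : ℕ} (hint : ∀ f : ℝ[X], Integrable (fun x => f.eval x) μ)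
    (L : ℕ → (ℝ[X] →ₗ[ℝ] ℝ)) (p : ℕ → ℝ[X])
    (horth : ∀ k l : ℕ, k ≠ l → ∫ t, (p k).eval t * (p l).eval t ∂μ = 0) :
    ∫ x : Fin m → ℝ, (Matrix.of fun i k : Fin m => (p k).eval (x i)).det *
        (big (n := n) L p x).det ∂(Measure.pi fun _ => μ) =
      (m.factorial : ℝ) * ((∏ j ∈ Finset.range m, ∫ t, ((p j).eval t) ^ 2 ∂μ) *
        Matrix.det (Matrix.of fun i j : Fin n => L i (p (m + (j : ℕ))))) := by
  have hI : ∀ k l, Integrable (fun t => (p k).eval t * (p l).eval t) μ := by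
    intro k l
    simpa using hint (p k * p l)
  simp_rw [expand]
  have hI2 : ∀ (τ : Equiv.Perm (Fin m)) (σ : Equiv.Perm (Idx m n)),
      Integrable (fun x : Fin m → ℝ => ((Equiv.Perm.sign σ : ℤ) : ℝ) *
      ((∏ j : Fin n, L j (p (cdeg (σ (Sum.inr j))))) *
      ∏ i : Fin m, ((p i).eval (x (τ i)) * (p (cdeg (σ (Sum.inl i)))).eval (x (τ i)))))
      (Measure.pi fun _ => μ) := fun τ σ =>
    ((intble_perm (fun i t => (p i).eval t * (p (cdeg (σ (Sum.inl i)))).eval t)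
      (fun i => hI _ _) τ).const_mul _).const_mul _
  rw [integral_finsetSum _ (fun τ _ => integrable_finsetSum _ fun σ _ => hI2 τ σ)]
  have hB : ∀ τ : Equiv.Perm (Fin m), ∫ x : Fin m → ℝ,
      ∑ σ : Equiv.Perm (Idx m n), ((Equiv.Perm.sign σ : ℤ) : ℝ) *
      ((∏ j : Fin n, L j (p (cdeg (σ (Sum.inr j))))) *
      ∏ i : Fin m, ((p i).eval (x (τ i)) * (p (cdeg (σ (Sum.inl i)))).eval (x (τ i))))
      ∂(Measure.pi fun _ => μ) = (Matrix.of fun r s : Idx m n =>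
        Sum.elim (fun i : Fin m => ∫ t, (p i).eval t * (p (cdeg s)).eval t ∂μ)
          (fun j : Fin n => L j (p (cdeg s))) r).det := by
    intro τ
    rw [integral_finsetSum _ (fun σ _ => hI2 τ σ), ← Matrix.det_transpose, Matrix.det_apply']
    refine Finset.sum_congr rfl fun σ _ => ?_
    rw [integral_const_mul, integral_const_mul,
      int_perm (fun i t => (p i).eval t * (p (cdeg (σ (Sum.inl i)))).eval t),
      Fintype.prod_sum_type]
    simp only [Matrix.transpose_apply, Matrix.of_apply, Sum.elim_inl, Sum.elim_inr]
    ring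
  have hdet : (Matrix.of fun r s : Idx m n =>
        Sum.elim (fun i : Fin m => ∫ t, (p i).eval t * (p (cdeg s)).eval t ∂μ)
          (fun j : Fin n => L j (p (cdeg s))) r) =
      Matrix.fromBlocks (Matrix.diagonal fun i : Fin m => ∫ t, ((p i).eval t) ^ 2 ∂μ) 0
        (Matrix.of fun (i : Fin n) (j : Fin m) => L i (p j))
        (Matrix.of fun i j : Fin n => L i (p (m + (j : ℕ)))) := by
    ext r s
    rcases r with i | i <;> rcases s with k | k
    · simp only [Matrix.of_apply, Sum.elim_inl, cdeg_inl, Matrix.fromBlocks_apply₁₁,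
        Matrix.diagonal_apply]
      split_ifs with h
      · subst h; simp only [sq]
      · exact horth _ _ (fun h' => h (Fin.ext h'))
    · simp only [Matrix.of_apply, Sum.elim_inl, cdeg_inr, Matrix.fromBlocks_apply₁₂,
        Matrix.zero_apply]
      exact horth _ _ (by omega)
    · simp [cdeg_inl]
    · simp [cdeg_inr]
  simp_rw [hB]
  rw [hdet, Matrix.det_fromBlocks_zero₁₂, Matrix.det_diagonal,
    Fin.prod_univ_eq_prod_range (fun j => ∫ t, ((p j).eval t) ^ 2 ∂μ)]
  simp [Fintype.card_perm]

lemma general {m n : ℕ} (hm : 1 ≤ m) (hint : ∀ f : ℝ[X], Integrable (fun x => f.eval x) μ)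
    (L : ℕ → (ℝ[X] →ₗ[ℝ] ℝ)) (p a : ℕ → ℝ[X])
    (horth : ∀ k l : ℕ, k ≠ l → ∫ t, (p k).eval t * (p l).eval t ∂μ = 0)
    (hp : ∀ k, (p k).Monic) (hp' : ∀ k, (p k).natDegree = k)
    (ha : ∀ k, (a k).Monic) (ha' : ∀ k, (a k).natDegree = k)
    (hL : ∀ i < n, ∀ k < n, L i (a k) = if i = k then (i.factorial : ℝ) else 0)
    (hL' : ∀ i < n, ∀ q, L i (a n * q) = 0) :
    (∫ x : Fin m → ℝ,
        (∏ i : Fin m, ∏ j ∈ Finset.Ioi i, (x i - x j)) ^ 2 *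
          ∏ j : Fin m, (a n).eval (x j)
        ∂(Measure.pi fun _ => μ))
      = ((-1 : ℝ) ^ (m * n) * (m.factorial : ℝ) *
            ∏ j ∈ Finset.range m, ∫ t, ((p j).eval t) ^ 2 ∂μ) /
          (∏ j ∈ Finset.range n, (j.factorial : ℝ)) *
        Matrix.det (Matrix.of fun i j : Fin n => L i (p (m + (j : ℕ)))) := by
  have hF : (∏ j ∈ Finset.range n, (j.factorial : ℝ)) ≠ 0 :=
    Finset.prod_ne_zero_iff.2 fun j _ => by positivity
  have hs : ((-1 : ℝ) ^ (m * n)) * (-1) ^ (m * n) = 1 := by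
    rw [← mul_pow]; simp
  have hpt : ∀ x : Fin m → ℝ, (∏ i : Fin m, ∏ j ∈ Finset.Ioi i, (x i - x j)) ^ 2 *
          ∏ j : Fin m, (a n).eval (x j) =
      ((-1 : ℝ) ^ (m * n) / (∏ j ∈ Finset.range n, (j.factorial : ℝ))) *
      ((Matrix.of fun i k : Fin m => (p k).eval (x i)).det * (big (n := n) L p x).det) := by
    intro x
    have hv : (∏ i : Fin m, ∏ j ∈ Finset.Ioi i, (x i - x j)) ^ 2 =
        (Matrix.vandermonde x).det ^ 2 := by
      rw [Matrix.det_vandermonde]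
      simp_rw [← Finset.prod_pow]
      refine Finset.prod_congr rfl fun i _ => Finset.prod_congr rfl fun j _ => by ring
    rw [hv, big_val hm L p a x hp hp' ha ha' hL hL',
      ← Matrix.det_eval_matrixOfPolynomials_eq_det_vandermonde x (fun k : Fin m => p k)
        (fun k => hp' k) (fun k => hp k)]
    rw [div_mul_eq_mul_div, eq_div_iff hF]
    linear_combination (-1 : ℝ) * (Matrix.vandermonde x).det ^ 2 * (∏ j : Fin m, (a n).eval (x j)) *
      (∏ j ∈ Finset.range n, (j.factorial : ℝ)) * hs
  simp_rw [hpt]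
  rw [integral_const_mul, integral_main hint L p horth]
  ring

end integral

/-- derivative functionals -/
noncomputable def LD (u : ℝ) (i : ℕ) : ℝ[X] →ₗ[ℝ] ℝ :=
  (i.factorial : ℝ) • (Polynomial.leval u ∘ₗ Polynomial.hasseDeriv i)

lemma LD_apply (u : ℝ) (i : ℕ) (f : ℝ[X]) :
    LD u i f = (i.factorial : ℝ) * (taylor u f).coeff i := by
  simp [LD, taylor_coeff, Polynomial.leval]

lemma iterDeriv_poly (f : ℝ[X]) (i : ℕ) :
    iteratedDeriv i (fun t => f.eval t) = fun t => (derivative^[i] f).eval t := by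
  induction i generalizing f with
  | zero => simp
  | succ i ih =>
    rw [iteratedDeriv_succ', Function.iterate_succ_apply, ← ih]
    congr 1
    ext t
    simp

lemma LD_eq (u : ℝ) (i : ℕ) (f : ℝ[X]) : iteratedDeriv i (fun t => f.eval t) u = LD u i f := by
  rw [iterDeriv_poly, ← factorial_smul_hasseDeriv]
  simp [LD, Polynomial.leval]

/-- difference functionals -/
noncomputable def LF (u : ℝ) (i : ℕ) : ℝ[X] →ₗ[ℝ] ℝ where
  toFun f := (fwdDiff (1 : ℝ))^[i] (fun t => f.eval t) u
  map_add' f g := by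
    have : (fun t => (f + g).eval t) = (fun t => f.eval t) + (fun t => g.eval t) := by
      ext; simp
    rw [this, fwdDiff_iter_add]; rfl
  map_smul' c f := by
    have : (fun t => (c • f).eval t) = c • (fun t => f.eval t) := by
      ext; simp
    rw [this, fwdDiff_iter_const_smul]; rfl

lemma LF_apply (u : ℝ) (i : ℕ) (f : ℝ[X]) :
    LF u i f = (fwdDiff (1 : ℝ))^[i] (fun t => f.eval t) u := rfl

lemma fdiff_eq : fdiff = fwdDiff (1 : ℝ) := rfl

noncomputable def aF (u : ℝ) (k : ℕ) : ℝ[X] := ∏ j ∈ Finset.range k, (X - C (u + j))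

lemma aF_monic (u : ℝ) (k : ℕ) : (aF u k).Monic :=
  monic_prod_of_monic _ _ fun j _ => monic_X_sub_C _

lemma aF_deg (u : ℝ) (k : ℕ) : (aF u k).natDegree = k := by
  rw [aF, natDegree_prod_of_monic _ _ fun j _ => monic_X_sub_C _]
  simp only [natDegree_X_sub_C, Finset.sum_const, Finset.card_range, smul_eq_mul, mul_one]

lemma aF_zero (u : ℝ) (k j : ℕ) (h : j < k) : (aF u k).eval (u + j) = 0 := by
  rw [aF, eval_prod]
  exact Finset.prod_eq_zero (Finset.mem_range.2 h) (by simp)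

lemma LF_zero (u : ℝ) (i k : ℕ) (h : i < k) (q : ℝ[X]) : LF u i (aF u k * q) = 0 := by
  rw [LF_apply, fwdDiff_iter_eq_sum_shift]
  refine Finset.sum_eq_zero fun j hj => ?_
  have hj' := Finset.mem_range.1 hj
  rw [eval_mul, nsmul_one, aF_zero u k j (by omega), zero_mul, smul_zero]

lemma LF_val (u : ℝ) (i k : ℕ) : LF u i (aF u k) = if i = k then (i.factorial : ℝ) else 0 := by
  rcases lt_trichotomy i k with h | h | h
  · rw [if_neg h.ne, ← mul_one (aF u k), LF_zero u i k h]
  · subst h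
    have := congrFun (Polynomial.fwdDiff_iter_degree_eq_factorial (aF u i)) u
    rw [aF_deg, aF_monic] at this
    rw [if_pos rfl, LF_apply]
    simpa using this
  · rw [if_neg h.ne', LF_apply]
    have := congrFun (Polynomial.fwdDiff_iter_eq_zero_of_degree_lt (P := aF u k) (n := i)
      (by rw [aF_deg]; exact h)) u
    exact this

end SelbergAux

/-- Selberg-type integrals for the operators `d/dx` and `Δ`
evaluated via Wronskian/Casorati determinants of the monic orthogonal
polynomials. -/
theorem selberg_type_integrals_deriv_and_delta
    (μ : Measure ℝ) [SigmaFinite μ]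
    (hint : ∀ f : Polynomial ℝ, Integrable (fun x => f.eval x) μ)
    (p : ℕ → Polynomial ℝ) (hmonic : ∀ k : ℕ, (p k).Monic)
    (hdeg : ∀ k : ℕ, (p k).natDegree = k)
    (horth : ∀ k l : ℕ, k ≠ l → ∫ t, (p k).eval t * (p l).eval t ∂μ = 0)
    (u : ℝ) (n m : ℕ) (hm : 1 ≤ m) :
    ((∫ x : Fin m → ℝ,
        (∏ i : Fin m, ∏ j ∈ Finset.Ioi i, (x i - x j)) ^ 2 *
          ∏ j : Fin m, (x j - u) ^ n
        ∂(Measure.pi fun _ => μ))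
      = ((-1 : ℝ) ^ (m * n) * (m.factorial : ℝ) *
            ∏ j ∈ Finset.range m, ∫ t, ((p j).eval t) ^ 2 ∂μ) /
          (∏ j ∈ Finset.range n, (j.factorial : ℝ)) *
        Matrix.det (Matrix.of fun i j : Fin n =>
          iteratedDeriv (i : ℕ) (fun t => (p (m + (j : ℕ))).eval t) u))
    ∧ ((∫ x : Fin m → ℝ,
        (∏ i : Fin m, ∏ j ∈ Finset.Ioi i, (x i - x j)) ^ 2 *
          ∏ j : Fin m, poch (x j - u - n + 1) n
        ∂(Measure.pi fun _ => μ))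
      = ((-1 : ℝ) ^ (m * n) * (m.factorial : ℝ) *
            ∏ j ∈ Finset.range m, ∫ t, ((p j).eval t) ^ 2 ∂μ) /
          (∏ j ∈ Finset.range n, (j.factorial : ℝ)) *
        Matrix.det (Matrix.of fun i j : Fin n =>
          fdiff^[(i : ℕ)] (fun t => (p (m + (j : ℕ))).eval t) u)) := by
  constructor
  · have h := SelbergAux.general (n := n) hm hint (SelbergAux.LD u) p (fun k => (X - C u) ^ k) horth
      hmonic hdeg (fun k => (monic_X_sub_C u).pow k) (fun k => by
        rw [(monic_X_sub_C u).natDegree_pow, natDegree_X_sub_C, mul_one])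
      (fun i _ k _ => by
        rw [SelbergAux.LD_apply, taylor_pow]
        simp [coeff_X_pow]) (fun i hi q => by
        rw [SelbergAux.LD_apply, taylor_mul, taylor_pow]
        simp [coeff_X_pow_mul', hi])
    simp_rw [SelbergAux.LD_eq]
    simpa using h
  · have h := SelbergAux.general (n := n) hm hint (SelbergAux.LF u) p (SelbergAux.aF u) horth
      hmonic hdeg (SelbergAux.aF_monic u) (SelbergAux.aF_deg u)
      (fun i _ k _ => SelbergAux.LF_val u i k) (fun i hi q => SelbergAux.LF_zero u i n hi q)
    have hp : ∀ y : ℝ, poch (y - u - n + 1) n = (SelbergAux.aF u n).eval y := by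
      intro y
      rw [poch, SelbergAux.aF, eval_prod, ← Finset.prod_range_reflect]
      refine Finset.prod_congr rfl fun j hj => ?_
      have hj' := Finset.mem_range.1 hj
      rw [Nat.sub_sub, Nat.cast_sub (by omega)]
      simp
      ring
    simp_rw [hp, SelbergAux.fdiff_eq]
    exact h
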